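/- arXiv:1108.4980 — 2 statements merged into one kernel-verified Lean document; each statement's English description precedes it below -/
import Mathlib

section
/- Let x > 0 be real and set q = e^{−π/x}. Then F_{(6,1)}(x) = −(π/(√3 · x)) · log( (φ(−q⁴) − 3φ(−q³⁶) + 2√3 · q · f(−q²⁴)) / (φ(−q⁴) − 3φ(−q³⁶) − 2√3 · q · f(−q²⁴)) ). -/
open Filter

/-- Ramanujan's theta function `φ(q) = ∑_{n ∈ ℤ} q^{n²}`. -/
noncomputable def phi (q : ℝ) : ℝ := ∑' n : ℤ, q ^ (n ^ 2)

/-- Ramanujan's function `f(-q) = ∏_{m=1}^∞ (1 - q^m)`, as a function of `q`. -/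
noncomputable def fneg (q : ℝ) : ℝ := ∏' m : ℕ, (1 - q ^ (m + 1))

/-!
The partial fraction expansion of the cotangent evaluates the sum over `m` as a hyperbolic cosecant,
so that the double series becomes `2π/x` times the Lambert series
`∑ₙ (-1)ⁿ / K · q^K / (1 - q^{2K})` with `K = |6n + 1|`. As `k` runs over the natural numbers,
`(cos (kπ/6) - cos (5kπ/6)) / √3` vanishes unless `k = |6n + 1|` for some `n ∈ ℤ`, where it is
`(-1)ⁿ`. Expanding `1 / (1 - q^{2k})` geometrically and summing over `k` first turns the series
into logarithms of the products `∏ⱼ (1 + 2 q^{2j+1} cos θ + q^{4j+2})` at `θ = π/6` and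
`θ = 5π/6`, which by the Jacobi triple product are `Θ(θ) = ∑ₙ q^{n²} cos (nθ)` up to a common
factor. Splitting `Θ(θ)` by the residue of `n` modulo `6` writes it as a combination of three
series `∑ₖ (-1)ᵏ q^{(6k+r)²}`: that with `r = 0` is `φ(-q³⁶)`, that with `r = 1` is `q f(-q²⁴)` by
the pentagonal number theorem, and that with `r = 2` is obtained from `Θ(π/2) = φ(-q⁴)`.
-/

section QBinomial

variable {R : Type*} [CommRing R]

/-- The finite `q`-Pochhammer product `(p; p)_n = ∏_{i=1}^n (1 - p^i)`. -/
def qPochhammer (p : R) (n : ℕ) : R := ∏ i ∈ Finset.range n, (1 - p ^ (i + 1))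

lemma qPochhammer_succ (p : R) (n : ℕ) :
    qPochhammer p (n + 1) = qPochhammer p n * (1 - p ^ (n + 1)) :=
  Finset.prod_range_succ _ _

/-- The Gaussian binomial coefficient, defined by the `q`-Pascal rule so that it makes sense (and
is a polynomial in `p`) over any commutative ring. -/
def qChoose (p : R) : ℕ → ℕ → R
  | _, 0 => 1
  | 0, _ + 1 => 0
  | n + 1, k + 1 => qChoose p n k + p ^ (k + 1) * qChoose p n (k + 1)

lemma qChoose_zero_right (p : R) (n : ℕ) : qChoose p n 0 = 1 := by
  cases n <;> rfl

lemma qChoose_eq_zero_of_lt (p : R) {n k : ℕ} (h : n < k) : qChoose p n k = 0 := by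
  induction n generalizing k with
  | zero => obtain ⟨k, rfl⟩ := Nat.exists_eq_succ_of_ne_zero h.ne'; rfl
  | succ n ih =>
    obtain ⟨k, rfl⟩ := Nat.exists_eq_succ_of_ne_zero (Nat.ne_zero_of_lt h)
    simp [qChoose, ih (show n < k by omega), ih (show n < k + 1 by omega)]

lemma qChoose_self (p : R) (n : ℕ) : qChoose p n n = 1 := by
  induction n with
  | zero => rfl
  | succ n ih => simp [qChoose, ih, qChoose_eq_zero_of_lt]

lemma qChoose_add_mul_qPochhammer (p : R) (a b : ℕ) :
    qChoose p (a + b) a * (qPochhammer p a * qPochhammer p b) = qPochhammer p (a + b) := by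
  induction a generalizing b with
  | zero => simp [qChoose_zero_right, qPochhammer]
  | succ a ih_a =>
    induction b with
    | zero => simp [qChoose_self, qPochhammer]
    | succ b ih_b =>
      have h_left := ih_a (b + 1)
      rw [show a + 1 + (b + 1) = a + b + 1 + 1 by ring, qChoose, qPochhammer_succ p (a + b + 1)]
      rw [show a + 1 + b = a + b + 1 by ring] at ih_b
      rw [show a + (b + 1) = a + b + 1 by ring] at h_left
      simp only [qPochhammer_succ p a, qPochhammer_succ p b] at h_left ih_b ⊢
      linear_combination (1 - p ^ (a + 1)) * h_left + p ^ (a + 1) * (1 - p ^ (b + 1)) * ih_b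

theorem prod_one_add_mul_pow_eq_sum_qChoose (p z : R) (n : ℕ) :
    ∏ j ∈ Finset.range n, (1 + z * p ^ j) =
      ∑ k ∈ Finset.range (n + 1), qChoose p n k * p ^ k.choose 2 * z ^ k := by
  induction n generalizing z with
  | zero => simp [qChoose_zero_right]
  | succ n ih =>
    have h_shift : ∏ j ∈ Finset.range n, (1 + z * p ^ (j + 1)) =
        ∑ k ∈ Finset.range (n + 1), qChoose p n k * p ^ k.choose 2 * (z * p) ^ k := by
      simp_rw [← ih, pow_succ', mul_assoc]
    have h_tail : ∑ k ∈ Finset.range (n + 1), qChoose p n k * p ^ k.choose 2 * (z * p) ^ k =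
        1 + ∑ k ∈ Finset.range (n + 1),
          qChoose p n (k + 1) * p ^ (k + 1).choose 2 * (z * p) ^ (k + 1) := by
      rw [Finset.sum_range_succ', Finset.sum_range_succ _ n, qChoose_eq_zero_of_lt p n.lt_succ_self]
      simp [qChoose_zero_right, add_comm]
    have h_pascal (k : ℕ) : qChoose p (n + 1) (k + 1) * p ^ (k + 1).choose 2 * z ^ (k + 1) =
        qChoose p n (k + 1) * p ^ (k + 1).choose 2 * (z * p) ^ (k + 1) +
          qChoose p n k * p ^ k.choose 2 * (z * p) ^ k * z := by
      rw [qChoose, Nat.choose_succ_succ' k 1, Nat.choose_one_right]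
      ring
    rw [Finset.prod_range_succ', h_shift, pow_zero, mul_one, mul_add, mul_one, Finset.sum_mul,
      Finset.sum_range_succ' _ (n + 1), Finset.sum_congr rfl fun k _ => h_pascal k,
      Finset.sum_add_distrib, h_tail]
    simp only [qChoose_zero_right, Nat.choose_zero_succ, pow_zero, mul_one]
    ring

/-- The Gaussian binomial coefficient `[2N choose N + n]`, indexed by its distance `n ∈ ℤ` from
the centre and extended by zero outside `-N ≤ n ≤ N`. -/
def centralQChoose (p : R) (N : ℕ) (n : ℤ) : R :=
  if -(N : ℤ) ≤ n then qChoose p (2 * N) (n + N).toNat else 0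

end QBinomial

section FiniteTripleProduct

variable {K : Type*} [Field K] {q z : K}

lemma prod_range_mul_inv_pow_odd (q z : K) (N : ℕ) :
    ∏ j ∈ Finset.range N, z * (q ^ (2 * j + 1))⁻¹ = z ^ N * (q ^ N ^ 2)⁻¹ := by
  induction N with
  | zero => simp
  | succ N ih => rw [Finset.prod_range_succ, ih, pow_succ z, add_sq, pow_add, pow_add]; ring

lemma prod_range_two_mul_one_add_mul_sq_pow (hq : q ≠ 0) (hz : z ≠ 0) (N : ℕ) :
    ∏ j ∈ Finset.range (2 * N), (1 + z * q ^ (1 - 2 * N : ℤ) * (q ^ 2) ^ j) =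
      z ^ N * (q ^ N ^ 2)⁻¹ *
        ∏ j ∈ Finset.range N, ((1 + z * q ^ (2 * j + 1)) * (1 + z⁻¹ * q ^ (2 * j + 1))) := by
  have h_low : ∏ j ∈ Finset.range N, (1 + z * q ^ (1 - 2 * N : ℤ) * (q ^ 2) ^ j) =
      ∏ j ∈ Finset.range N, (z * (q ^ (2 * j + 1))⁻¹ * (1 + z⁻¹ * q ^ (2 * j + 1))) := by
    rw [← Finset.prod_range_reflect]
    refine Finset.prod_congr rfl fun j hj => ?_
    have h_exp : q ^ (1 - 2 * N : ℤ) * (q ^ 2) ^ (N - 1 - j) = (q ^ (2 * j + 1))⁻¹ := by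
      rw [← pow_mul, ← zpow_natCast, ← zpow_natCast, ← zpow_add₀ hq, ← zpow_neg]
      congr 1
      have hj_lt := Finset.mem_range.mp hj
      omega
    rw [mul_assoc, h_exp]
    field_simp
    ring
  have h_high (j : ℕ) : z * q ^ (1 - 2 * N : ℤ) * (q ^ 2) ^ (N + j) = z * q ^ (2 * j + 1) := by
    rw [mul_assoc, ← pow_mul, ← zpow_natCast, ← zpow_natCast, ← zpow_add₀ hq]
    congr 2
    push_cast
    ring
  rw [two_mul N, Finset.prod_range_add, h_low, Finset.prod_mul_distrib,
    prod_range_mul_inv_pow_odd]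
  simp only [h_high, Finset.prod_mul_distrib]
  ring

theorem finite_jacobi_triple_product (hq : q ≠ 0) (hz : z ≠ 0) (N : ℕ) :
    ∏ j ∈ Finset.range N, ((1 + z * q ^ (2 * j + 1)) * (1 + z⁻¹ * q ^ (2 * j + 1))) =
      ∑ k ∈ Finset.range (2 * N + 1),
        qChoose (q ^ 2) (2 * N) k * (q ^ ((k - N : ℤ) ^ 2) * z ^ (k - N : ℤ)) := by
  have h_unit : z ^ N * (q ^ N ^ 2)⁻¹ ≠ 0 := by positivity
  apply mul_left_cancel₀ h_unit
  rw [← prod_range_two_mul_one_add_mul_sq_pow hq hz, prod_one_add_mul_pow_eq_sum_qChoose,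
    Finset.mul_sum]
  refine Finset.sum_congr rfl fun k _ => ?_
  have h_choose : ((2 * k.choose 2 : ℕ) : ℤ) = k * (k - 1) := by
    rw [Nat.choose_two_right, Nat.mul_div_cancel' (Nat.even_mul_pred_self k).two_dvd]
    cases k <;> simp
  have h_q : (q ^ 2) ^ k.choose 2 * (q ^ (1 - 2 * N : ℤ)) ^ k =
      (q ^ N ^ 2)⁻¹ * q ^ ((k - N : ℤ) ^ 2) := by
    rw [← pow_mul, ← zpow_natCast q, ← zpow_natCast (q ^ _), ← zpow_mul, ← zpow_natCast q,
      ← zpow_neg, ← zpow_add₀ hq, ← zpow_add₀ hq, h_choose]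
    congr 1
    push_cast
    ring
  have h_z : z ^ k = z ^ N * z ^ (k - N : ℤ) := by
    rw [zpow_sub₀ hz, zpow_natCast, zpow_natCast]
    field_simp
  rw [mul_pow, h_z]
  linear_combination qChoose (q ^ 2) (2 * N) k * z ^ N * z ^ (k - N : ℤ) * h_q

lemma qPochhammer_mul_prod_eq_qPochhammer_three_mul (hq : q ≠ 0) (N : ℕ) :
    qPochhammer ((q ^ 3) ^ 2) N * ∏ j ∈ Finset.range N,
        ((1 + -q * (q ^ 3) ^ (2 * j + 1)) * (1 + (-q)⁻¹ * (q ^ 3) ^ (2 * j + 1))) =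
      qPochhammer (q ^ 2) (3 * N) := by
  induction N with
  | zero => simp [qPochhammer]
  | succ N ih =>
    rw [Finset.prod_range_succ, mul_add_one, qPochhammer_succ (q ^ 2), qPochhammer_succ (q ^ 2),
      qPochhammer_succ (q ^ 2), qPochhammer_succ, ← ih]
    field_simp
    ring

end FiniteTripleProduct

section TripleProduct

variable {𝕜 : Type*} [NormedField 𝕜] {p q z : 𝕜}

lemma one_sub_pow_succ_ne_zero (hp : ‖p‖ < 1) (i : ℕ) : 1 - p ^ (i + 1) ≠ 0 := fun h => by
  have h_norm : ‖p‖ ^ (i + 1) = 1 := by rw [← norm_pow, ← sub_eq_zero.mp h, norm_one]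
  exact (pow_lt_one₀ (norm_nonneg p) hp i.succ_ne_zero).ne h_norm

lemma qPochhammer_ne_zero (hp : ‖p‖ < 1) (n : ℕ) : qPochhammer p n ≠ 0 :=
  Finset.prod_ne_zero_iff.mpr fun i _ => one_sub_pow_succ_ne_zero hp i

lemma summable_norm_neg_pow_succ (hp : ‖p‖ < 1) : Summable fun m : ℕ => ‖-p ^ (m + 1)‖ := by
  simp only [norm_neg, norm_pow]
  exact (summable_nat_add_iff 1).mpr (summable_geometric_of_lt_one (norm_nonneg p) hp)

lemma qChoose_eq_div (hp : ‖p‖ < 1) (a b : ℕ) :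
    qChoose p (a + b) a = qPochhammer p (a + b) * ((qPochhammer p a)⁻¹ * (qPochhammer p b)⁻¹) := by
  rw [← mul_inv, eq_mul_inv_iff_mul_eq₀, qChoose_add_mul_qPochhammer]
  exact mul_ne_zero (qPochhammer_ne_zero hp a) (qPochhammer_ne_zero hp b)

lemma hasSum_centralQChoose_mul (hq : q ≠ 0) (hz : z ≠ 0) (N : ℕ) :
    HasSum (fun n : ℤ => centralQChoose (q ^ 2) N n * (q ^ (n ^ 2) * z ^ n))
      (∏ j ∈ Finset.range N, ((1 + z * q ^ (2 * j + 1)) * (1 + z⁻¹ * q ^ (2 * j + 1)))) := by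
  have h_inj : Function.Injective fun k : ℕ => (k - N : ℤ) := fun a b h => by
    simpa using h
  rw [finite_jacobi_triple_product hq hz, ← h_inj.hasSum_iff]
  · have h_term (k : ℕ) : centralQChoose (q ^ 2) N (k - N : ℤ) = qChoose (q ^ 2) (2 * N) k := by
      simp [centralQChoose]
    simp only [Function.comp_def, h_term]
    refine hasSum_sum_of_ne_finset_zero fun k hk => ?_
    rw [Finset.mem_range, Nat.lt_succ_iff, not_le] at hk
    rw [qChoose_eq_zero_of_lt _ hk, zero_mul]
  · intro n hn
    rw [centralQChoose, if_neg, zero_mul]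
    exact fun h => hn ⟨(n + N).toNat, by grind⟩

lemma summable_nat_pow_sq_mul_pow (hq : ‖q‖ < 1) (z : 𝕜) :
    Summable fun n : ℕ => ‖q ^ n ^ 2 * z ^ n‖ := by
  have h_small : ∀ᶠ n : ℕ in atTop, ‖q ^ n * z‖ ≤ 1 / 2 := by
    have h := ((tendsto_pow_atTop_nhds_zero_of_norm_lt_one hq).mul_const z).norm
    rw [zero_mul, norm_zero] at h
    exact h.eventually_le_const (by norm_num)
  refine .of_norm_bounded_eventually_nat summable_geometric_two ?_
  filter_upwards [h_small] with n hn
  rw [norm_norm, sq, pow_mul, ← mul_pow, norm_pow]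
  gcongr

lemma summable_norm_zpow_sq_mul_zpow (hq : ‖q‖ < 1) (z : 𝕜) :
    Summable fun n : ℤ => ‖q ^ (n ^ 2) * z ^ n‖ := by
  refine .of_nat_of_neg ?_ ?_
  · exact_mod_cast summable_nat_pow_sq_mul_pow hq z
  · simp only [neg_sq, zpow_neg, ← inv_zpow]
    exact_mod_cast summable_nat_pow_sq_mul_pow hq z⁻¹

variable [CompleteSpace 𝕜]

lemma multipliable_one_sub_pow_succ (hp : ‖p‖ < 1) :
    Multipliable fun m : ℕ => 1 - p ^ (m + 1) := by
  simpa only [sub_eq_add_neg] using multipliable_one_add_of_summable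
    (f := fun m : ℕ => -p ^ (m + 1)) (summable_norm_neg_pow_succ hp)

lemma tendsto_qPochhammer (hp : ‖p‖ < 1) :
    Tendsto (qPochhammer p) atTop (nhds (∏' m : ℕ, (1 - p ^ (m + 1)))) :=
  (multipliable_one_sub_pow_succ hp).tendsto_prod_tprod_nat

lemma tprod_one_sub_pow_succ_ne_zero (hp : ‖p‖ < 1) : ∏' m : ℕ, (1 - p ^ (m + 1)) ≠ 0 := by
  simp only [sub_eq_add_neg]
  refine tprod_one_add_ne_zero_of_summable (fun i => ?_) (summable_norm_neg_pow_succ hp)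
  simpa only [sub_eq_add_neg] using one_sub_pow_succ_ne_zero hp i

lemma tendsto_inv_qPochhammer (hp : ‖p‖ < 1) :
    Tendsto (fun n => (qPochhammer p n)⁻¹) atTop (nhds (∏' m : ℕ, (1 - p ^ (m + 1)))⁻¹) :=
  (tendsto_qPochhammer hp).inv₀ (tprod_one_sub_pow_succ_ne_zero hp)

lemma exists_norm_qChoose_le (hp : ‖p‖ < 1) : ∃ C, ∀ n k, ‖qChoose p n k‖ ≤ C := by
  obtain ⟨A, hA⟩ := (tendsto_qPochhammer hp).norm.bddAbove_range
  obtain ⟨B, hB⟩ := (tendsto_inv_qPochhammer hp).norm.bddAbove_range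
  replace hA (n : ℕ) : ‖qPochhammer p n‖ ≤ A := hA ⟨n, rfl⟩
  replace hB (n : ℕ) : ‖(qPochhammer p n)⁻¹‖ ≤ B := hB ⟨n, rfl⟩
  have hA₀ : 0 ≤ A := (norm_nonneg _).trans (hA 0)
  have hB₀ : 0 ≤ B := (norm_nonneg _).trans (hB 0)
  refine ⟨A * (B * B), fun n k => ?_⟩
  rcases le_or_gt k n with hk | hk
  · obtain ⟨b, rfl⟩ := Nat.exists_eq_add_of_le hk
    rw [qChoose_eq_div hp, norm_mul, norm_mul]
    gcongr
    exacts [hA _, hB _, hB _]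
  · rw [qChoose_eq_zero_of_lt p hk, norm_zero]
    positivity

lemma tendsto_qChoose (hp : ‖p‖ < 1) {α : Type*} {l : Filter α} {a b : α → ℕ}
    (ha : Tendsto a l atTop) (hb : Tendsto b l atTop) :
    Tendsto (fun i => qChoose p (a i + b i) (a i)) l (nhds (∏' m : ℕ, (1 - p ^ (m + 1)))⁻¹) := by
  have h_ab : Tendsto (fun i => a i + b i) l atTop :=
    tendsto_atTop_mono (fun i => Nat.le_add_right _ _) ha
  have h := ((tendsto_qPochhammer hp).comp h_ab).mul
    (((tendsto_inv_qPochhammer hp).comp ha).mul ((tendsto_inv_qPochhammer hp).comp hb))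
  rw [mul_inv_cancel_left₀ (tprod_one_sub_pow_succ_ne_zero hp)] at h
  exact h.congr fun i => (qChoose_eq_div hp _ _).symm

lemma tendsto_centralQChoose (hp : ‖p‖ < 1) (n : ℤ) :
    Tendsto (fun N => centralQChoose p N n) atTop (nhds (∏' m : ℕ, (1 - p ^ (m + 1)))⁻¹) := by
  have ha : Tendsto (fun N : ℕ => (n + N).toNat) atTop atTop :=
    tendsto_atTop_mono (fun N => by grind) (tendsto_sub_atTop_nat n.natAbs)
  have hb : Tendsto (fun N : ℕ => (N - n : ℤ).toNat) atTop atTop :=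
    tendsto_atTop_mono (fun N => by grind) (tendsto_sub_atTop_nat n.natAbs)
  refine (tendsto_qChoose hp ha hb).congr' ?_
  filter_upwards [eventually_ge_atTop n.natAbs] with N hN
  rw [centralQChoose, if_pos (by omega)]
  congr 1
  omega

lemma exists_norm_centralQChoose_le (hp : ‖p‖ < 1) : ∃ C, ∀ N n, ‖centralQChoose p N n‖ ≤ C := by
  obtain ⟨C, hC⟩ := exists_norm_qChoose_le hp
  refine ⟨C, fun N n => ?_⟩
  rw [centralQChoose]
  split_ifs
  · exact hC _ _
  · exact norm_zero.le.trans ((norm_nonneg _).trans (hC 0 0))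

lemma multipliable_one_add_mul_pow_odd (hq : ‖q‖ < 1) (z : 𝕜) :
    Multipliable fun j : ℕ => 1 + z * q ^ (2 * j + 1) := by
  have h_odd : Function.Injective fun j : ℕ => 2 * j + 1 := fun a b h => by simpa using h
  have h_geom := (summable_geometric_of_lt_one (norm_nonneg q) hq).comp_injective h_odd
  apply multipliable_one_add_of_summable
  simpa only [norm_mul, norm_pow, Function.comp_def] using h_geom.mul_left ‖z‖

lemma multipliable_one_add_mul_pow_odd_mul (hq : ‖q‖ < 1) (z : 𝕜) :
    Multipliable fun j : ℕ => (1 + z * q ^ (2 * j + 1)) * (1 + z⁻¹ * q ^ (2 * j + 1)) :=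
  (multipliable_one_add_mul_pow_odd hq z).mul (multipliable_one_add_mul_pow_odd hq z⁻¹)

theorem jacobi_triple_product (hq₀ : q ≠ 0) (hq : ‖q‖ < 1) (hz : z ≠ 0) :
    HasSum (fun n : ℤ => q ^ (n ^ 2) * z ^ n)
      ((∏' m : ℕ, (1 - (q ^ 2) ^ (m + 1))) *
        ∏' j : ℕ, ((1 + z * q ^ (2 * j + 1)) * (1 + z⁻¹ * q ^ (2 * j + 1)))) := by
  have hp : ‖q ^ 2‖ < 1 := by
    rw [norm_pow]; exact pow_lt_one₀ (norm_nonneg q) hq two_ne_zero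
  obtain ⟨C, hC⟩ := exists_norm_centralQChoose_le hp
  have h_sum := summable_norm_zpow_sq_mul_zpow hq z
  have h_series := tendsto_tsum_of_dominated_convergence (𝓕 := atTop) (h_sum.mul_left C)
    (fun n => (tendsto_centralQChoose hp n).mul_const (q ^ (n ^ 2) * z ^ n))
    (.of_forall fun N n => (norm_mul_le _ _).trans (by gcongr; exact hC N n))
  have h_prod := (multipliable_one_add_mul_pow_odd_mul hq z).tendsto_prod_tprod_nat
  have h_eq := tendsto_nhds_unique
    (h_series.congr fun N => (hasSum_centralQChoose_mul hq₀ hz N).tsum_eq) h_prod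
  rw [tsum_mul_left, inv_mul_eq_iff_eq_mul₀ (tprod_one_sub_pow_succ_ne_zero hp)] at h_eq
  exact h_eq ▸ h_sum.of_norm.hasSum

theorem hasSum_pentagonal {s : 𝕜} (hs₀ : s ≠ 0) (hs : ‖s‖ < 1) :
    HasSum (fun n : ℤ => (-1) ^ n * s ^ (3 * n ^ 2 + n)) (∏' m : ℕ, (1 - (s ^ 2) ^ (m + 1))) := by
  have norm_pow_lt_one {k : ℕ} (hk : k ≠ 0) : ‖s ^ k‖ < 1 := by
    rw [norm_pow]; exact pow_lt_one₀ (norm_nonneg s) hs hk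
  have h_prod := (multipliable_one_add_mul_pow_odd_mul (norm_pow_lt_one three_ne_zero)
    (-s)).tendsto_prod_tprod_nat
  have h_left := (tendsto_qPochhammer (p := (s ^ 3) ^ 2)
    (by rw [← pow_mul]; exact norm_pow_lt_one (by norm_num))).mul h_prod
  have h_right := (tendsto_qPochhammer (norm_pow_lt_one two_ne_zero)).comp
    (tendsto_id.const_mul_atTop' three_pos)
  have h_eq := tendsto_nhds_unique
    (h_left.congr (qPochhammer_mul_prod_eq_qPochhammer_three_mul hs₀)) h_right
  rw [← h_eq]
  convert jacobi_triple_product (pow_ne_zero 3 hs₀) (norm_pow_lt_one three_ne_zero)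
    (neg_ne_zero.mpr hs₀) using 2 with n
  rw [← neg_one_mul s, mul_zpow, ← zpow_natCast s 3, ← zpow_mul, zpow_add₀ hs₀]
  push_cast
  ring

end TripleProduct

section CosTheta

variable {q : ℝ}

/-- The theta series `∑_{n ∈ ℤ} q^{n²} cos(nθ)`, which is Jacobi's `ϑ₃` with nome `q` at the
point `θ / 2`. -/
noncomputable def cosTheta (q θ : ℝ) : ℝ := ∑' n : ℤ, q ^ (n ^ 2) * Real.cos (n * θ)

lemma norm_lt_one_of_pos (hq₀ : 0 < q) (hq₁ : q < 1) : ‖q‖ < 1 := by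
  rwa [Real.norm_of_nonneg hq₀.le]

lemma one_add_two_mul_cos_mul_add_sq_pos (θ : ℝ) {y : ℝ} (hy₀ : 0 < y) (hy₁ : y < 1) :
    0 < 1 + 2 * Real.cos θ * y + y ^ 2 := by
  nlinarith [Real.neg_one_le_cos θ]

lemma summable_log_one_add_two_mul_cos (hq₀ : 0 < q) (hq₁ : q < 1) (θ : ℝ) :
    Summable fun j : ℕ =>
      Real.log (1 + 2 * Real.cos θ * q ^ (2 * j + 1) + (q ^ (2 * j + 1)) ^ 2) := by
  have h_geom := summable_geometric_of_lt_one hq₀.le hq₁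
  have h_odd : Summable fun j : ℕ => q ^ (2 * j + 1) :=
    h_geom.comp_injective (i := fun j => 2 * j + 1) fun a b h => by simpa using h
  have h_odd_sq : Summable fun j : ℕ => (q ^ (2 * j + 1)) ^ 2 := by
    simp only [← pow_mul]
    exact h_geom.comp_injective (i := fun j => (2 * j + 1) * 2) fun a b h => by simpa using h
  simpa only [add_assoc] using
    Real.summable_log_one_add_of_summable ((h_odd.mul_left (2 * Real.cos θ)).add h_odd_sq)

lemma one_add_exp_mul_mul_one_add_inv_exp_mul (θ y : ℝ) :
    (1 + Complex.exp (θ * Complex.I) * y) * (1 + (Complex.exp (θ * Complex.I))⁻¹ * y) =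
      ((1 + 2 * Real.cos θ * y + y ^ 2 : ℝ) : ℂ) := by
  have h_cos := Complex.two_cos (θ : ℂ)
  rw [neg_mul, Complex.exp_neg] at h_cos
  push_cast
  linear_combination (-y : ℂ) * h_cos +
    (y : ℂ) ^ 2 * mul_inv_cancel₀ (Complex.exp_ne_zero (θ * Complex.I))

lemma ofReal_fneg {p : ℝ} (hp : ‖p‖ < 1) : (fneg p : ℂ) = ∏' m : ℕ, (1 - (p : ℂ) ^ (m + 1)) := by
  rw [fneg]
  simpa only [Complex.ofRealHom_eq_coe, Complex.ofReal_sub, Complex.ofReal_one,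
    Complex.ofReal_pow] using (multipliable_one_sub_pow_succ hp).map_tprod Complex.ofRealHom
      Complex.continuous_ofReal

lemma tprod_one_add_exp_mul (hq₀ : 0 < q) (hq₁ : q < 1) (θ : ℝ) :
    ∏' j : ℕ, ((1 + Complex.exp (θ * Complex.I) * (q : ℂ) ^ (2 * j + 1)) *
        (1 + (Complex.exp (θ * Complex.I))⁻¹ * (q : ℂ) ^ (2 * j + 1))) =
      Real.exp (∑' j : ℕ,
        Real.log (1 + 2 * Real.cos θ * q ^ (2 * j + 1) + (q ^ (2 * j + 1)) ^ 2)) := by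
  have h_pos (j : ℕ) := one_add_two_mul_cos_mul_add_sq_pos θ (pow_pos hq₀ (2 * j + 1))
    (pow_lt_one₀ hq₀.le hq₁ (by omega))
  have h_prod := Real.hasProd_of_hasSum_log h_pos
    (summable_log_one_add_two_mul_cos hq₀ hq₁ θ).hasSum
  simp_rw [← Complex.ofReal_pow, one_add_exp_mul_mul_one_add_inv_exp_mul]
  exact (h_prod.map Complex.ofRealHom Complex.continuous_ofReal).tprod_eq

theorem hasSum_zpow_sq_mul_cos (hq₀ : 0 < q) (hq₁ : q < 1) (θ : ℝ) :
    HasSum (fun n : ℤ => q ^ (n ^ 2) * Real.cos (n * θ))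
      (fneg (q ^ 2) * Real.exp (∑' j : ℕ,
        Real.log (1 + 2 * Real.cos θ * q ^ (2 * j + 1) + (q ^ (2 * j + 1)) ^ 2))) := by
  have h_triple := jacobi_triple_product (q := (q : ℂ)) (z := Complex.exp (θ * Complex.I))
    (by exact_mod_cast hq₀.ne')
    (by rw [Complex.norm_real]; exact norm_lt_one_of_pos hq₀ hq₁) (Complex.exp_ne_zero _)
  rw [tprod_one_add_exp_mul hq₀ hq₁, ← Complex.ofReal_pow, ← ofReal_fneg
    (norm_lt_one_of_pos (pow_pos hq₀ 2) (pow_lt_one₀ hq₀.le hq₁ two_ne_zero)),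
    ← Complex.ofReal_mul] at h_triple
  refine (Complex.hasSum_re h_triple).congr_fun fun n => ?_
  rw [← Complex.exp_int_mul, ← Complex.ofReal_zpow, Complex.re_ofReal_mul, ← mul_assoc,
    ← Complex.ofReal_intCast, ← Complex.ofReal_mul, Complex.exp_ofReal_mul_I_re]

lemma cosTheta_eq (hq₀ : 0 < q) (hq₁ : q < 1) (θ : ℝ) :
    cosTheta q θ = fneg (q ^ 2) * Real.exp (∑' j : ℕ,
      Real.log (1 + 2 * Real.cos θ * q ^ (2 * j + 1) + (q ^ (2 * j + 1)) ^ 2)) :=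
  (hasSum_zpow_sq_mul_cos hq₀ hq₁ θ).tsum_eq

lemma fneg_sq_ne_zero (hq₀ : 0 < q) (hq₁ : q < 1) : fneg (q ^ 2) ≠ 0 :=
  tprod_one_sub_pow_succ_ne_zero (norm_lt_one_of_pos (pow_pos hq₀ 2)
    (pow_lt_one₀ hq₀.le hq₁ two_ne_zero))

lemma cosTheta_ne_zero (hq₀ : 0 < q) (hq₁ : q < 1) (θ : ℝ) : cosTheta q θ ≠ 0 := by
  rw [cosTheta_eq hq₀ hq₁]
  exact mul_ne_zero (fneg_sq_ne_zero hq₀ hq₁) (Real.exp_ne_zero _)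

theorem hasSum_log_one_add_two_mul_cos (hq₀ : 0 < q) (hq₁ : q < 1) (θ : ℝ) :
    HasSum (fun j : ℕ => Real.log (1 + 2 * Real.cos θ * q ^ (2 * j + 1) + (q ^ (2 * j + 1)) ^ 2))
      (Real.log (cosTheta q θ / fneg (q ^ 2))) := by
  rw [cosTheta_eq hq₀ hq₁, mul_div_cancel_left₀ _ (fneg_sq_ne_zero hq₀ hq₁), Real.log_exp]
  exact (summable_log_one_add_two_mul_cos hq₀ hq₁ θ).hasSum

end CosTheta

section LambertSeries

variable {q : ℝ}

lemma norm_one_sub_mul_exp_sq (θ y : ℝ) :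
    ‖1 - y * Complex.exp (θ * Complex.I)‖ ^ 2 = 1 - 2 * Real.cos θ * y + y ^ 2 := by
  rw [← Complex.normSq_eq_norm_sq, Complex.normSq_apply]
  simp only [Complex.sub_re, Complex.sub_im, Complex.one_re, Complex.one_im, Complex.re_ofReal_mul,
    Complex.im_ofReal_mul, Complex.exp_ofReal_mul_I_re, Complex.exp_ofReal_mul_I_im]
  linear_combination y ^ 2 * Real.sin_sq_add_cos_sq θ

theorem hasSum_cos_mul_pow_div (θ : ℝ) {y : ℝ} (hy : |y| < 1) :
    HasSum (fun k : ℕ => Real.cos (k * θ) / k * y ^ k)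
      (-(1 / 2) * Real.log (1 - 2 * Real.cos θ * y + y ^ 2)) := by
  have h_norm : ‖y * Complex.exp (θ * Complex.I)‖ < 1 := by
    rwa [norm_mul, Complex.norm_exp_ofReal_mul_I, mul_one, Complex.norm_real, Real.norm_eq_abs]
  convert Complex.hasSum_re (Complex.hasSum_taylorSeries_neg_log h_norm) using 1
  · funext k
    rw [Complex.div_natCast_re, mul_pow, ← Complex.exp_nat_mul, ← Complex.ofReal_pow,
      Complex.re_ofReal_mul, ← mul_assoc, ← Complex.ofReal_natCast, ← Complex.ofReal_mul,
      Complex.exp_ofReal_mul_I_re]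
    ring
  · rw [Complex.neg_re, Complex.log_re, ← norm_one_sub_mul_exp_sq, Real.log_pow]
    push_cast
    ring

lemma summable_prod_mul_pow_odd_pow (hq₀ : 0 < q) (hq₁ : q < 1) {a : ℕ → ℝ} {C : ℝ}
    (ha : ∀ k, |a k| ≤ C) (ha₀ : a 0 = 0) :
    Summable fun x : ℕ × ℕ => a x.2 * (q ^ (2 * x.1 + 1)) ^ x.2 := by
  have h_geom := summable_geometric_of_lt_one hq₀.le hq₁
  have h_prod := h_geom.mul_of_nonneg h_geom (fun _ => by positivity) (fun _ => by positivity)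
  refine .of_norm_bounded (h_prod.mul_left C) ?_
  rintro ⟨j, k⟩
  have hC : 0 ≤ C := (abs_nonneg _).trans (ha 0)
  rcases k.eq_zero_or_pos with rfl | hk
  · simp only [ha₀, zero_mul, norm_zero]
    positivity
  · have h_exp : j + k ≤ (2 * j + 1) * k := by nlinarith
    rw [norm_mul, Real.norm_eq_abs, Real.norm_of_nonneg (by positivity), ← pow_add, ← pow_mul]
    gcongr ?_ * ?_
    · exact ha k
    · exact pow_le_pow_of_le_one hq₀.le hq₁.le h_exp

theorem hasSum_lambert_of_hasSum_odd_powers (hq₀ : 0 < q) (hq₁ : q < 1) {a : ℕ → ℝ} {g : ℕ → ℝ}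
    {C S : ℝ} (ha : ∀ k, |a k| ≤ C) (ha₀ : a 0 = 0)
    (h_inner : ∀ j, HasSum (fun k => a k * (q ^ (2 * j + 1)) ^ k) (g j)) (h_outer : HasSum g S) :
    HasSum (fun k => a k * (q ^ k / (1 - q ^ (2 * k)))) S := by
  obtain ⟨T, hT⟩ := summable_prod_mul_pow_odd_pow hq₀ hq₁ ha ha₀
  obtain rfl : S = T := h_outer.unique (hT.prod_fiberwise h_inner)
  refine ((Equiv.prodComm ℕ ℕ).hasSum_iff.mpr hT).prod_fiberwise fun k => ?_
  rcases k.eq_zero_or_pos with rfl | hk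
  · simp [ha₀]
  · have h_geom := hasSum_geometric_of_lt_one (pow_nonneg hq₀.le (2 * k))
      (pow_lt_one₀ hq₀.le hq₁ (by omega))
    rw [← mul_div_assoc, div_eq_mul_inv]
    refine (h_geom.mul_left (a k * q ^ k)).congr_fun fun j => ?_
    simp only [Function.comp_apply, Equiv.prodComm_apply, Prod.swap]
    rw [← pow_mul, ← pow_mul]
    ring

theorem hasSum_lambert_cos (hq₀ : 0 < q) (hq₁ : q < 1) (θ : ℝ) :
    HasSum (fun k : ℕ => Real.cos (k * θ) / k * (q ^ k / (1 - q ^ (2 * k))))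
      (-(1 / 2) * Real.log (cosTheta q (Real.pi - θ) / fneg (q ^ 2))) := by
  have h_abs (k : ℕ) : |Real.cos (k * θ) / k| ≤ 1 := by
    rw [abs_div, Nat.abs_cast]
    rcases k.eq_zero_or_pos with rfl | hk
    · simp
    · exact div_le_one_of_le₀ ((Real.abs_cos_le_one _).trans (mod_cast hk)) k.cast_nonneg
  have h_log := (hasSum_log_one_add_two_mul_cos hq₀ hq₁ (Real.pi - θ)).mul_left (-(1 / 2))
  refine hasSum_lambert_of_hasSum_odd_powers hq₀ hq₁ h_abs (by simp) (fun j => ?_) h_log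
  convert hasSum_cos_mul_pow_div θ (y := q ^ (2 * j + 1)) ?_ using 4
  · rw [Real.cos_pi_sub]
    ring
  · rw [abs_of_pos (pow_pos hq₀ _)]
    exact pow_lt_one₀ hq₀.le hq₁ (by omega)

theorem hasSum_lambert_cos_sub_cos (hq₀ : 0 < q) (hq₁ : q < 1) (θ : ℝ) :
    HasSum (fun k : ℕ => (Real.cos (k * θ) - Real.cos (k * (Real.pi - θ))) / k *
        (q ^ k / (1 - q ^ (2 * k))))
      (1 / 2 * Real.log (cosTheta q θ / cosTheta q (Real.pi - θ))) := by
  have h_diff := (hasSum_lambert_cos hq₀ hq₁ θ).sub (hasSum_lambert_cos hq₀ hq₁ (Real.pi - θ))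
  have hF := fneg_sq_ne_zero hq₀ hq₁
  have hθ := cosTheta_ne_zero hq₀ hq₁ θ
  have hθ' := cosTheta_ne_zero hq₀ hq₁ (Real.pi - θ)
  have h_value (a b c : ℝ) : -(1 / 2) * (b - c) - -(1 / 2) * (a - c) = 1 / 2 * (a - b) := by ring
  rw [sub_sub_cancel, Real.log_div hθ hF, Real.log_div hθ' hF, h_value,
    ← Real.log_div hθ hθ'] at h_diff
  exact h_diff.congr_fun fun k => by rw [sub_div, sub_mul]

end LambertSeries

section SixMulAddOne

variable {q : ℝ}

lemma cos_nat_mul_pi_div_six_sub_eq_zero {k : ℕ} (hk : 2 ∣ k ∨ 3 ∣ k) :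
    Real.cos (k * (Real.pi / 6)) - Real.cos (k * (5 * Real.pi / 6)) = 0 := by
  rw [Real.cos_sub_cos]
  rcases hk with ⟨m, rfl⟩ | ⟨m, rfl⟩
  · have h_arg : ((2 * m : ℕ) * (Real.pi / 6) + (2 * m : ℕ) * (5 * Real.pi / 6)) / 2 =
        m * Real.pi := by push_cast; ring
    rw [h_arg, Real.sin_nat_mul_pi, mul_zero, zero_mul]
  · have h_arg : ((3 * m : ℕ) * (Real.pi / 6) - (3 * m : ℕ) * (5 * Real.pi / 6)) / 2 =
        -(m * Real.pi) := by push_cast; ring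
    rw [h_arg, Real.sin_neg, Real.sin_nat_mul_pi, neg_zero, mul_zero]

lemma cos_natAbs_mul (m : ℤ) (θ : ℝ) : Real.cos (m.natAbs * θ) = Real.cos (m * θ) := by
  rcases Int.natAbs_eq m with h | h <;> rw [h] <;> simp

lemma cos_five_pi_div_six : Real.cos (5 * Real.pi / 6) = -(√3 / 2) := by
  rw [← Real.cos_pi_div_six, ← Real.cos_pi_sub]
  ring_nf

lemma cos_natAbs_six_mul_add_one_sub (n : ℤ) :
    Real.cos ((6 * n + 1).natAbs * (Real.pi / 6)) -
      Real.cos ((6 * n + 1).natAbs * (5 * Real.pi / 6)) = √3 * (-1) ^ n := by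
  have h_one : ((6 * n + 1 : ℤ) : ℝ) * (Real.pi / 6) = Real.pi / 6 + n * Real.pi := by
    push_cast; ring
  have h_five : ((6 * n + 1 : ℤ) : ℝ) * (5 * Real.pi / 6) =
      5 * Real.pi / 6 + (5 * n : ℤ) * Real.pi := by
    push_cast; ring
  have h_sign : (-1 : ℝ) ^ (5 * n) = (-1) ^ n := by
    rw [zpow_mul]; norm_num
  rw [cos_natAbs_mul, cos_natAbs_mul, h_one, h_five, Real.cos_add_int_mul_pi,
    Real.cos_add_int_mul_pi, h_sign, Real.cos_pi_div_six, cos_five_pi_div_six]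
  ring

lemma injective_natAbs_six_mul_add_one : Function.Injective fun n : ℤ => (6 * n + 1).natAbs :=
  fun a b h => by simp only at h; omega

lemma two_dvd_or_three_dvd_of_notMem_range {k : ℕ}
    (hk : k ∉ Set.range fun n : ℤ => (6 * n + 1).natAbs) : 2 ∣ k ∨ 3 ∣ k := by
  by_contra! h
  have h_mod : k % 6 = 1 ∨ k % 6 = 5 := by omega
  rcases h_mod with h_mod | h_mod
  · exact hk ⟨(k - 1) / 6, by simp only; omega⟩
  · exact hk ⟨-((k + 1) / 6), by simp only; omega⟩

theorem hasSum_lambert_six_mul_add_one (hq₀ : 0 < q) (hq₁ : q < 1) :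
    HasSum (fun n : ℤ => (-1) ^ n / ((6 * n + 1).natAbs : ℝ) *
        (q ^ (6 * n + 1).natAbs / (1 - q ^ (2 * (6 * n + 1).natAbs))))
      (1 / (2 * √3) * Real.log (cosTheta q (Real.pi / 6) / cosTheta q (5 * Real.pi / 6))) := by
  have h_angle : Real.pi - Real.pi / 6 = 5 * Real.pi / 6 := by ring
  have h_lambert := (hasSum_lambert_cos_sub_cos hq₀ hq₁ (Real.pi / 6)).mul_left (1 / √3)
  rw [h_angle, ← mul_assoc, one_div_mul_one_div, mul_comm √3,
    ← injective_natAbs_six_mul_add_one.hasSum_iff] at h_lambert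
  · refine h_lambert.congr_fun fun n => ?_
    rw [Function.comp_apply, cos_natAbs_six_mul_add_one_sub]
    field_simp
  · intro k hk
    rw [cos_nat_mul_pi_div_six_sub_eq_zero (two_dvd_or_three_dvd_of_notMem_range hk), zero_div,
      zero_mul, mul_zero]

end SixMulAddOne

section Dissection

variable {q : ℝ} {m : ℕ}

/-- The alternating theta series `∑_{k ∈ ℤ} (-1)^k q^{(mk+r)²}`. When `cos(mθ) = -1`, the terms of
`cosTheta q θ` with index congruent to `r` modulo `m` add up to `cos(rθ)` times this series. -/
noncomputable def altTheta (m : ℕ) (r : ℤ) (q : ℝ) : ℝ :=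
  ∑' k : ℤ, (-1) ^ k * q ^ ((m * k + r) ^ 2)

lemma tsum_int_eq_sum_tsum_mul_add [NeZero m] {f : ℤ → ℝ} (hf : Summable f) :
    ∑' n, f n = ∑ r : Fin m, ∑' k : ℤ, f (m * k + r) := by
  have h_prod : Summable fun p : Fin m × ℤ => f (m * p.2 + p.1) := by
    refine (((Equiv.prodComm _ _).trans (Int.divModEquiv m).symm).summable_iff.mpr hf).congr
      fun p => ?_
    simp [Int.divModEquiv, mul_comm]
  rw [← tsum_fintype (L := .unconditional _), ← h_prod.tsum_prod,
    ← ((Equiv.prodComm _ _).trans (Int.divModEquiv m).symm).tsum_eq f]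
  refine tsum_congr fun p => ?_
  simp [Int.divModEquiv, mul_comm]

lemma cos_mul_add_mul_of_cos_eq_neg_one {θ : ℝ} (hθ : Real.cos (m * θ) = -1) (k r : ℤ) :
    Real.cos ((m * k + r : ℤ) * θ) = (-1) ^ k * Real.cos (r * θ) := by
  obtain ⟨l, hl⟩ := Real.cos_eq_neg_one_iff.mp hθ
  have h_arg : ((m * k + r : ℤ) : ℝ) * θ = r * θ + (k * (1 + 2 * l) : ℤ) * Real.pi := by
    push_cast
    linear_combination -(k : ℝ) * hl
  have h_sign : (-1 : ℝ) ^ (k * (1 + 2 * l)) = (-1) ^ k := by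
    rw [mul_comm, zpow_mul, zpow_add₀ (by norm_num), zpow_mul]
    norm_num
  rw [h_arg, Real.cos_add_int_mul_pi, h_sign]

theorem cosTheta_eq_sum_cos_mul_altTheta [NeZero m] (hq₀ : 0 < q) (hq₁ : q < 1) {θ : ℝ}
    (hθ : Real.cos (m * θ) = -1) :
    cosTheta q θ = ∑ r ∈ Finset.range m, Real.cos (r * θ) * altTheta m r q := by
  rw [cosTheta, tsum_int_eq_sum_tsum_mul_add (m := m)
    (hasSum_zpow_sq_mul_cos hq₀ hq₁ θ).summable]
  rw [← Fin.sum_univ_eq_sum_range (fun r : ℕ => Real.cos (r * θ) * altTheta m r q)]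
  refine Finset.sum_congr rfl fun r _ => ?_
  rw [altTheta, ← tsum_mul_left]
  refine tsum_congr fun k => ?_
  rw [cos_mul_add_mul_of_cos_eq_neg_one hθ, Int.cast_natCast]
  ring

lemma altTheta_sub (m : ℕ) (r : ℤ) (q : ℝ) : altTheta m (m - r) q = -altTheta m r q := by
  rw [altTheta, altTheta, ← tsum_neg, ← (Equiv.subLeft (-1 : ℤ)).tsum_eq]
  refine tsum_congr fun k => ?_
  have h_exp : (m * (-1 - k) + (m - r)) ^ 2 = (m * k + r) ^ 2 := by ring
  have h_sign : (-1 : ℝ) ^ (-1 - k) = -(-1) ^ k := by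
    rw [← neg_add', ← inv_zpow', inv_neg_one, zpow_add₀ (by norm_num), zpow_one, neg_one_mul]
  rw [Equiv.subLeft_apply, h_exp, h_sign, neg_mul]

lemma altTheta_zero (m : ℕ) (q : ℝ) : altTheta m 0 q = phi (-(q ^ m ^ 2)) := by
  refine tsum_congr fun k => ?_
  have h_sign : (-1 : ℝ) ^ (k ^ 2) = (-1) ^ k := by
    rcases k.even_or_odd with hk | hk
    · rw [hk.neg_one_zpow, (hk.pow_of_ne_zero two_ne_zero).neg_one_zpow]
    · rw [hk.neg_one_zpow, hk.pow.neg_one_zpow]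
  rw [neg_eq_neg_one_mul (q ^ m ^ 2), mul_zpow, h_sign, ← zpow_natCast, ← zpow_mul, add_zero,
    mul_pow]
  push_cast
  rfl

lemma altTheta_six_one (hq₀ : 0 < q) (hq₁ : q < 1) : altTheta 6 1 q = q * fneg (q ^ 24) := by
  have h_pentagonal := hasSum_pentagonal (pow_pos hq₀ 12).ne'
    (norm_lt_one_of_pos (pow_pos hq₀ 12) (pow_lt_one₀ hq₀.le hq₁ (by norm_num)))
  rw [fneg, show q ^ 24 = (q ^ 12) ^ 2 by ring]
  refine ((h_pentagonal.mul_left q).congr_fun fun k => ?_).tsum_eq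
  rw [show ((6 : ℕ) * k + 1) ^ 2 = 12 * (3 * k ^ 2 + k) + 1 by push_cast; ring,
    zpow_add_one₀ hq₀.ne', zpow_mul]
  norm_cast
  ring

lemma cosTheta_pi_div_two (hq₀ : 0 < q) (hq₁ : q < 1) :
    cosTheta q (Real.pi / 2) = phi (-(q ^ 4)) := by
  have h_cos : Real.cos ((2 : ℕ) * (Real.pi / 2)) = -1 := by
    rw [Nat.cast_ofNat, mul_div_cancel₀ _ two_ne_zero, Real.cos_pi]
  rw [cosTheta_eq_sum_cos_mul_altTheta hq₀ hq₁ h_cos]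
  simp [Finset.sum_range_succ, altTheta_zero]

lemma cosTheta_eq_of_cos_six_mul_eq_neg_one (hq₀ : 0 < q) (hq₁ : q < 1) {θ : ℝ}
    (hθ : Real.cos (6 * θ) = -1) :
    cosTheta q θ = phi (-(q ^ 36)) + 2 * Real.cos θ * (q * fneg (q ^ 24)) +
      2 * Real.cos (2 * θ) * altTheta 6 2 q := by
  have h_cos_four : Real.cos (4 * θ) = -Real.cos (2 * θ) := by
    simpa using cos_mul_add_mul_of_cos_eq_neg_one (m := 6) hθ 1 (-2)
  have h_cos_five : Real.cos (5 * θ) = -Real.cos θ := by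
    simpa using cos_mul_add_mul_of_cos_eq_neg_one (m := 6) hθ 1 (-1)
  have h_three : altTheta 6 3 q = 0 := self_eq_neg.mp (altTheta_sub 6 3 q)
  have h_four : altTheta 6 4 q = -altTheta 6 2 q := altTheta_sub 6 2 q
  have h_five : altTheta 6 5 q = -altTheta 6 1 q := altTheta_sub 6 1 q
  rw [cosTheta_eq_sum_cos_mul_altTheta (m := 6) hq₀ hq₁ hθ]
  simp only [Finset.sum_range_succ, Finset.range_zero, Finset.sum_empty, Nat.cast_zero,
    Nat.cast_one, Nat.cast_ofNat, zero_mul, one_mul, Real.cos_zero, altTheta_zero, Nat.reducePow,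
    altTheta_six_one hq₀ hq₁, h_three, h_four, h_five, h_cos_four, h_cos_five]
  ring

theorem two_mul_cosTheta_eq (hq₀ : 0 < q) (hq₁ : q < 1) {θ : ℝ} (h_six : Real.cos (6 * θ) = -1)
    (h_two : Real.cos (2 * θ) = 1 / 2) :
    2 * cosTheta q θ =
      3 * phi (-(q ^ 36)) - phi (-(q ^ 4)) + 4 * Real.cos θ * q * fneg (q ^ 24) := by
  have h_half := cosTheta_eq_of_cos_six_mul_eq_neg_one hq₀ hq₁ (θ := Real.pi / 2) (by
    rw [show 6 * (Real.pi / 2) = Real.pi + 2 * Real.pi by ring, Real.cos_add_two_pi, Real.cos_pi])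
  rw [cosTheta_pi_div_two hq₀ hq₁, Real.cos_pi_div_two, mul_div_cancel₀ _ two_ne_zero,
    Real.cos_pi] at h_half
  rw [cosTheta_eq_of_cos_six_mul_eq_neg_one hq₀ hq₁ h_six, h_two, h_half]
  ring

lemma two_mul_cosTheta_pi_div_six (hq₀ : 0 < q) (hq₁ : q < 1) :
    2 * cosTheta q (Real.pi / 6) =
      3 * phi (-(q ^ 36)) - phi (-(q ^ 4)) + 2 * √3 * q * fneg (q ^ 24) := by
  have h_six : 6 * (Real.pi / 6) = Real.pi := by ring
  have h_two : 2 * (Real.pi / 6) = Real.pi / 3 := by ring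
  rw [two_mul_cosTheta_eq hq₀ hq₁ (by rw [h_six, Real.cos_pi])
    (by rw [h_two, Real.cos_pi_div_three]), Real.cos_pi_div_six]
  ring

lemma two_mul_cosTheta_five_pi_div_six (hq₀ : 0 < q) (hq₁ : q < 1) :
    2 * cosTheta q (5 * Real.pi / 6) =
      3 * phi (-(q ^ 36)) - phi (-(q ^ 4)) - 2 * √3 * q * fneg (q ^ 24) := by
  have h_six : 6 * (5 * Real.pi / 6) = Real.pi + (2 : ℕ) * (2 * Real.pi) := by push_cast; ring
  have h_two : 2 * (5 * Real.pi / 6) = 2 * Real.pi - Real.pi / 3 := by ring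
  rw [two_mul_cosTheta_eq hq₀ hq₁ (by rw [h_six, Real.cos_add_nat_mul_two_pi, Real.cos_pi])
    (by rw [h_two, Real.cos_two_pi_sub, Real.cos_pi_div_three]), cos_five_pi_div_six]
  ring

theorem phi_fneg_quotient_eq_cosTheta_div_cosTheta (hq₀ : 0 < q) (hq₁ : q < 1) :
    (phi (-(q ^ 4)) - 3 * phi (-(q ^ 36)) + 2 * √3 * q * fneg (q ^ 24)) /
        (phi (-(q ^ 4)) - 3 * phi (-(q ^ 36)) - 2 * √3 * q * fneg (q ^ 24)) =
      cosTheta q (5 * Real.pi / 6) / cosTheta q (Real.pi / 6) := by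
  rw [← mul_div_mul_left (cosTheta q (5 * Real.pi / 6)) _ two_ne_zero,
    two_mul_cosTheta_five_pi_div_six hq₀ hq₁, two_mul_cosTheta_pi_div_six hq₀ hq₁, ← neg_div_neg_eq]
  ring_nf

end Dissection

section CosecantSeries

variable {b : ℝ}

lemma hasSum_int_neg_one_zpow_mul {f : ℤ → ℝ} {a c : ℝ} (hf : HasSum f a)
    (hf_even : HasSum (fun k => f (2 * k)) c) :
    HasSum (fun m => (-1) ^ m * f m) (2 * c - a) := by
  have h_inj : Function.Injective fun k : ℤ => 2 * k := mul_right_injective₀ two_ne_zero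
  have h_even : HasSum (fun m : ℤ => if Even m then f m else 0) c := by
    rw [← h_inj.hasSum_iff]
    · exact hf_even.congr_fun fun k => if_pos (even_two_mul k)
    · intro m hm
      exact if_neg fun ⟨k, hk⟩ => hm ⟨k, by simp only; omega⟩
  refine ((h_even.mul_left 2).sub hf).congr_fun fun m => ?_
  rcases m.even_or_odd with hm | hm
  · rw [hm.neg_one_zpow, if_pos hm]
    ring
  · rw [hm.neg_one_zpow, if_neg (Int.not_even_iff_odd.mpr hm)]
    ring

lemma I_mul_mem_integerComplement (hb : b ≠ 0) :
    Complex.I * b ∈ Complex.integerComplement := by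
  rintro ⟨n, hn⟩
  exact hb (by simpa using (congrArg Complex.im hn).symm)

lemma I_div_mul_cotTerm (hb : b ≠ 0) (n : ℕ) :
    Complex.I / (2 * b) * cotTerm (Complex.I * b) n =
      ((1 / ((n + 1) ^ 2 + b ^ 2) : ℝ) : ℂ) := by
  have h_factor : (Complex.I * b + (n + 1)) * (Complex.I * b - (n + 1)) =
      -((((n : ℝ) + 1) ^ 2 + b ^ 2 : ℝ) : ℂ) := by
    push_cast
    linear_combination (b : ℂ) ^ 2 * Complex.I_sq
  have h_ne : ((((n : ℝ) + 1) ^ 2 + b ^ 2 : ℝ) : ℂ) ≠ 0 := by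
    exact_mod_cast (by positivity : ((n : ℝ) + 1) ^ 2 + b ^ 2 ≠ 0)
  have hb' : (b : ℂ) ≠ 0 := Complex.ofReal_ne_zero.mpr hb
  rw [cotTerm_identity (I_mul_mem_integerComplement hb), h_factor, Complex.ofReal_div,
    Complex.ofReal_one]
  field_simp
  rw [Complex.I_sq, neg_neg]

lemma hasSum_nat_one_div_sq_add_sq (hb : b ≠ 0) :
    HasSum (fun n : ℕ => 1 / (((n : ℝ) + 1) ^ 2 + b ^ 2))
      (Real.pi * Real.cosh (Real.pi * b) / (2 * b * Real.sinh (Real.pi * b)) -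
        1 / (2 * b ^ 2)) := by
  have h_mem := I_mul_mem_integerComplement hb
  have h_cot := (summable_cotTerm h_mem).hasSum.mul_left (Complex.I / (2 * b))
  have hb' : (b : ℂ) ≠ 0 := Complex.ofReal_ne_zero.mpr hb
  have h_sinh : Complex.sinh (Real.pi * b) ≠ 0 := by
    exact_mod_cast Real.sinh_ne_zero.mpr (mul_ne_zero Real.pi_ne_zero hb)
  have h_value : Complex.I / (2 * b) * ∑' n, cotTerm (Complex.I * b) n =
      ((Real.pi * Real.cosh (Real.pi * b) / (2 * b * Real.sinh (Real.pi * b)) -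
        1 / (2 * b ^ 2) : ℝ) : ℂ) := by
    rw [← cot_series_rep' h_mem, Complex.cot_eq_cos_div_sin,
      show Real.pi * (Complex.I * b) = (Real.pi * b : ℂ) * Complex.I by ring,
      Complex.cos_mul_I, Complex.sin_mul_I]
    push_cast
    field_simp
  rw [h_value] at h_cot
  exact Complex.hasSum_ofReal.mp (h_cot.congr_fun fun n => (I_div_mul_cotTerm hb n).symm)

theorem hasSum_int_one_div_sq_add_sq (hb : b ≠ 0) :
    HasSum (fun m : ℤ => 1 / ((m : ℝ) ^ 2 + b ^ 2))
      (Real.pi * Real.cosh (Real.pi * b) / (b * Real.sinh (Real.pi * b))) := by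
  have h_nat := hasSum_nat_one_div_sq_add_sq hb
  have h_int := HasSum.of_add_one_of_neg_add_one (f := fun m : ℤ => 1 / ((m : ℝ) ^ 2 + b ^ 2))
    (h_nat.congr_fun fun n => by push_cast; rfl) (h_nat.congr_fun fun n => by push_cast; ring)
  convert h_int using 1
  have h_sinh : Real.sinh (Real.pi * b) ≠ 0 :=
    Real.sinh_ne_zero.mpr (mul_ne_zero Real.pi_ne_zero hb)
  push_cast
  field_simp
  ring

theorem hasSum_int_neg_one_zpow_div_sq_add_sq (hb : b ≠ 0) :
    HasSum (fun m : ℤ => (-1) ^ m / ((m : ℝ) ^ 2 + b ^ 2))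
      (Real.pi / (b * Real.sinh (Real.pi * b))) := by
  have h_even : HasSum (fun k : ℤ => 1 / (((2 * k : ℤ) : ℝ) ^ 2 + b ^ 2)) (1 / 4 *
      (Real.pi * Real.cosh (Real.pi * (b / 2)) / (b / 2 * Real.sinh (Real.pi * (b / 2))))) := by
    refine ((hasSum_int_one_div_sq_add_sq (div_ne_zero hb two_ne_zero)).mul_left (1 / 4)).congr_fun
      fun k => ?_
    rw [one_div_mul_one_div]
    push_cast
    ring_nf
  convert hasSum_int_neg_one_zpow_mul (hasSum_int_one_div_sq_add_sq hb) h_even using 1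
  · simp only [mul_one_div]
  · rw [show Real.pi * b = 2 * (Real.pi * (b / 2)) by ring, Real.sinh_two_mul, Real.cosh_two_mul,
      Real.sinh_sq]
    field_simp
    ring

theorem tsum_neg_one_zpow_add_div {x a : ℝ} (hx : x ≠ 0) (ha : a ≠ 0) (n : ℤ) :
    ∑' m : ℤ, (-1 : ℝ) ^ (m + n) / ((x * m) ^ 2 + a ^ 2) =
      (-1) ^ n * (Real.pi / (x * a)) * (1 / Real.sinh (Real.pi / x * a)) := by
  have h_csch := (hasSum_int_neg_one_zpow_div_sq_add_sq (div_ne_zero ha hx)).mul_left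
    ((-1) ^ n / x ^ 2)
  have h_value : (-1) ^ n / x ^ 2 * (Real.pi / (a / x * Real.sinh (Real.pi * (a / x)))) =
      (-1) ^ n * (Real.pi / (x * a)) * (1 / Real.sinh (Real.pi / x * a)) := by
    rw [div_mul_eq_mul_div Real.pi x a, mul_div_assoc]
    field_simp
  rw [h_value] at h_csch
  refine (h_csch.congr_fun fun m => ?_).tsum_eq
  have h_denom : (x * m) ^ 2 + a ^ 2 = x ^ 2 * ((m : ℝ) ^ 2 + (a / x) ^ 2) := by
    field_simp
  rw [h_denom, zpow_add₀ (by norm_num), mul_comm ((-1 : ℝ) ^ m), mul_div_mul_comm]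

lemma one_div_sinh (t : ℝ) :
    1 / Real.sinh t = 2 * (Real.exp (-t) / (1 - Real.exp (-t) ^ 2)) := by
  have h_sub : Real.exp t - Real.exp (-t) = (1 - Real.exp (-t) ^ 2) / Real.exp (-t) := by
    rw [sub_div, sq, mul_self_div_self, Real.exp_neg, one_div, inv_inv]
  rw [Real.sinh_eq, h_sub, one_div_div, div_div_eq_mul_div, mul_div_assoc]

lemma tsum_neg_one_zpow_add_div_six_mul_add_one {x : ℝ} (hx : x ≠ 0) (n : ℤ) :
    ∑' m : ℤ, (-1 : ℝ) ^ (m + n) / ((x * m) ^ 2 + (6 * (n : ℝ) + 1) ^ 2) =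
      2 * Real.pi / x * ((-1) ^ n / ((6 * n + 1).natAbs : ℝ) *
        (Real.exp (-Real.pi / x) ^ (6 * n + 1).natAbs /
          (1 - Real.exp (-Real.pi / x) ^ (2 * (6 * n + 1).natAbs)))) := by
  have h_abs : (6 * (n : ℝ) + 1) ^ 2 = ((6 * n + 1).natAbs : ℝ) ^ 2 := by
    rw [Nat.cast_natAbs, ← sq_abs]
    push_cast
    rfl
  have h_ne : ((6 * n + 1).natAbs : ℝ) ≠ 0 := by
    rw [Nat.cast_ne_zero]
    omega
  have h_exp (k : ℕ) : Real.exp (-(Real.pi / x * k)) = Real.exp (-Real.pi / x) ^ k := by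
    rw [← Real.exp_nat_mul]
    ring_nf
  rw [h_abs, tsum_neg_one_zpow_add_div hx h_ne, one_div_sinh, h_exp, ← pow_mul, mul_comm _ 2]
  field_simp

end CosecantSeries

/-- For real `x > 0`, with `q = e^{-π/x}`,
`F_{(6,1)}(x) = -(π/(√3 x)) log((φ(-q⁴) - 3φ(-q³⁶) + 2√3 q f(-q²⁴))
  / (φ(-q⁴) - 3φ(-q³⁶) - 2√3 q f(-q²⁴)))`. -/
theorem F61_evaluation (x : ℝ) (hx : 0 < x) (q : ℝ)
    (hq : q = Real.exp (-Real.pi / x)) :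
    Tendsto (fun N : ℕ => ∑ n ∈ Finset.Ioo (-(N : ℤ)) (N : ℤ),
        ∑' m : ℤ, (-1 : ℝ) ^ (m + n) / ((x * m) ^ 2 + (6 * (n : ℝ) + 1) ^ 2))
      atTop
      (nhds (-(Real.pi / (Real.sqrt 3 * x)) *
        Real.log ((phi (-(q ^ 4)) - 3 * phi (-(q ^ 36)) + 2 * Real.sqrt 3 * q * fneg (q ^ 24))
          / (phi (-(q ^ 4)) - 3 * phi (-(q ^ 36)) - 2 * Real.sqrt 3 * q * fneg (q ^ 24))))) := by
  have hq₀ : 0 < q := hq ▸ Real.exp_pos _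
  have hq₁ : q < 1 := by
    rw [hq, Real.exp_lt_one_iff]
    exact div_neg_of_neg_of_pos (neg_neg_of_pos Real.pi_pos) hx
  have h_lambert := (hasSum_lambert_six_mul_add_one hq₀ hq₁).mul_left (2 * Real.pi / x)
  have h_coeff (L : ℝ) :
      2 * Real.pi / x * (1 / (2 * √3) * L) = -(Real.pi / (√3 * x)) * -L := by
    field_simp
  rw [h_coeff, ← Real.log_inv, inv_div,
    ← phi_fneg_quotient_eq_cosTheta_div_cosTheta hq₀ hq₁] at h_lambert
  simp_rw [tsum_neg_one_zpow_add_div_six_mul_add_one hx.ne', ← hq]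
  exact h_lambert.comp (Finset.tendsto_Ioo_neg (R := ℤ))
end

section
/- Let x > 0 be real and set q = e^{−π/x}. Then F_{(3,1)}(x) = −(2π/(3x)) · log( χ(q³) / χ³(q) ). -/
open Filter

/-- Ramanujan's theta function `χ(q) = ∏_{m=0}^∞ (1 + q^{2m+1})`. -/
noncomputable def chi (q : ℝ) : ℝ := ∏' m : ℕ, (1 + q ^ (2 * m + 1))

/-!
The partial fraction expansion of the cosecant, taken at an imaginary argument, evaluates the inner
sum as `(-1)ⁿ π / (x a sinh (π a / x))` with `a = 3n + 1`. On the other side, expanding the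
logarithm of every factor of `χ(e⁻ᵗ)` into its power series and exchanging the two summations gives
`2 log χ(e⁻ᵗ) = ∑_{k ≥ 1} (-1)ᵏ⁺¹ / (k sinh (k t))`. Since `n ↦ |3n + 1|` enumerates the positive
integers prime to `3`, the outer sum is `π / x` times this series at `t = π / x` without the terms
for which `3 ∣ k`, and those terms form one third of the same series at `3 t`.
-/

open scoped Real

section Rearrangement

lemma hasSum_indicator_dvd_iff {M G : Type*} [MonoidWithZero M] [IsLeftCancelMulZero M]
    [AddCommMonoid G] [TopologicalSpace G] {d : M} (hd : d ≠ 0) {f : M → G} {s : G} :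
    HasSum ({m | d ∣ m}.indicator f) s ↔ HasSum (fun m => f (d * m)) s := by
  have range_mul : Set.range (d * ·) = {m | d ∣ m} :=
    Set.ext fun m => exists_congr fun k => eq_comm
  rw [← range_mul, ← hasSum_subtype_iff_indicator]
  exact (mul_right_injective₀ hd).hasSum_range_iff

lemma hasSum_neg_one_zpow_mul {R : Type*} [DivisionRing R] [TopologicalSpace R]
    [IsTopologicalRing R] {f : ℤ → R} {s e : R} (hf : HasSum f s)
    (heven : HasSum (fun m => f (2 * m)) e) :
    HasSum (fun m => (-1) ^ m * f m) (2 * e - s) := by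
  have hdvd : HasSum ({m | 2 ∣ m}.indicator f) e := (hasSum_indicator_dvd_iff two_ne_zero).2 heven
  refine ((hdvd.mul_left 2).sub hf).congr_fun fun m => ?_
  by_cases hm : m ∈ {m | 2 ∣ m}
  · rw [Set.indicator_of_mem hm, (even_iff_two_dvd.2 hm).neg_one_zpow, two_mul,
      add_sub_cancel_right, one_mul]
  · have hodd : Odd m := Int.not_even_iff_odd.1 (mt even_iff_two_dvd.1 hm)
    rw [Set.indicator_of_notMem hm, hodd.neg_one_zpow, mul_zero, zero_sub, neg_one_mul]

lemma injective_natAbs_three_mul_add_one :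
    Function.Injective fun n : ℤ => (3 * n + 1).natAbs :=
  fun a b (hab : (3 * a + 1).natAbs = (3 * b + 1).natAbs) => by omega

lemma range_natAbs_three_mul_add_one :
    Set.range (fun n : ℤ => (3 * n + 1).natAbs) = {k | 3 ∣ k}ᶜ := by
  ext k
  simp only [Set.mem_range, Set.mem_compl_iff, Set.mem_ofPred_eq]
  refine ⟨fun ⟨n, hn⟩ => by omega, fun hk => ?_⟩
  obtain hk | hk : k % 3 = 1 ∨ k % 3 = 2 := by omega
  · exact ⟨(k / 3 : ℕ), by omega⟩
  · exact ⟨-((k / 3 : ℕ) + 1), by omega⟩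

lemma hasSum_natAbs_three_mul_add_one {G : Type*} [AddCommGroup G] [TopologicalSpace G]
    [IsTopologicalAddGroup G] {f : ℕ → G} {s t : G} (hf : HasSum f s)
    (hthree : HasSum (fun k => f (3 * k)) t) :
    HasSum (fun n : ℤ => f (3 * n + 1).natAbs) (s - t) := by
  have hcompl : HasSum ({k | 3 ∣ k}ᶜ.indicator f) (s - t) := by
    rw [Set.indicator_compl]
    exact hf.sub ((hasSum_indicator_dvd_iff three_ne_zero).2 hthree)
  rw [← range_natAbs_three_mul_add_one, ← hasSum_subtype_iff_indicator] at hcompl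
  exact injective_natAbs_three_mul_add_one.hasSum_range_iff.1 hcompl

end Rearrangement

section PartialFractions

open Complex

lemma hasSum_one_div_sq_sub_sq {z : ℂ} (hz : z ∈ integerComplement) :
    HasSum (fun m : ℤ => 1 / (z ^ 2 - (m : ℂ) ^ 2)) (π * cot (π * z) / z) := by
  have hz₀ : z ≠ 0 := integerComplement.ne_zero hz
  have hcot : HasSum (cotTerm z) (π * cot (π * z) - 1 / z) :=
    cot_series_rep' hz ▸ (summable_cotTerm hz).hasSum
  have hpos : HasSum (fun n : ℕ => 1 / (z ^ 2 - ((n : ℂ) + 1) ^ 2))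
      ((π * cot (π * z) - 1 / z) / (2 * z)) := by
    refine (hcot.div_const (2 * z)).congr_fun fun n => ?_
    rw [cotTerm_identity hz, mul_div_cancel_left₀ _ (mul_ne_zero two_ne_zero hz₀), sq_sub_sq]
  have hint := HasSum.of_add_one_of_neg_add_one (f := fun m : ℤ => 1 / (z ^ 2 - (m : ℂ) ^ 2))
    (by simpa only [Int.cast_add, Int.cast_natCast, Int.cast_one] using hpos)
    (by simpa only [Int.cast_neg, Int.cast_add, Int.cast_natCast, Int.cast_one, neg_sq] using hpos)
  convert! hint using 1
  rw [Int.cast_zero]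
  field_simp
  ring

lemma cot_half_sub_cot {w : ℂ} (hw : sin w ≠ 0) : cot (w / 2) - cot w = 1 / sin w := by
  have hdouble : sin w = 2 * sin (w / 2) * cos (w / 2) := by rw [← sin_two_mul]; ring_nf
  have hcos : cos w = 2 * cos (w / 2) ^ 2 - 1 := by rw [← cos_two_mul]; ring_nf
  rw [hdouble] at hw
  have hs : sin (w / 2) ≠ 0 := right_ne_zero_of_mul (left_ne_zero_of_mul hw)
  have hc : cos (w / 2) ≠ 0 := right_ne_zero_of_mul hw
  rw [cot, cot, hdouble, hcos]
  field_simp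
  ring

lemma hasSum_neg_one_zpow_div_sq_sub_sq {z : ℂ} (hz : z ∈ integerComplement) :
    HasSum (fun m : ℤ => (-1) ^ m / (z ^ 2 - (m : ℂ) ^ 2)) (π / (z * sin (π * z))) := by
  have hz₀ : z ≠ 0 := integerComplement.ne_zero hz
  have hhalf : z / 2 ∈ integerComplement := fun ⟨n, hn⟩ =>
    hz ⟨2 * n, by push_cast; rw [hn]; ring⟩
  have heven : HasSum (fun m : ℤ => 1 / (z ^ 2 - ((2 * m : ℤ) : ℂ) ^ 2))
      (π * cot (π * z / 2) / (2 * z)) := by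
    convert! (hasSum_one_div_sq_sub_sq hhalf).div_const 4 using 1
    · funext m
      rw [div_div]
      push_cast
      ring_nf
    · rw [mul_div_assoc]
      field_simp
      ring
  have hvalue : π / (z * sin (π * z)) =
      2 * (π * cot (π * z / 2) / (2 * z)) - π * cot (π * z) / z := by
    rw [div_mul_eq_div_mul_one_div, ← cot_half_sub_cot (sin_pi_mul_ne_zero hz)]
    field_simp
  rw [hvalue]
  exact (hasSum_neg_one_zpow_mul (hasSum_one_div_sq_sub_sq hz) heven).congr_fun
    fun m => div_eq_mul_one_div _ _

lemma ofReal_mul_I_mem_integerComplement {c : ℝ} (hc : c ≠ 0) :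
    (c * I : ℂ) ∈ integerComplement := by
  rintro ⟨n, hn⟩
  have him := congrArg im hn
  simp only [intCast_im, im_ofReal_mul, I_im, mul_one] at him
  exact hc him.symm

lemma hasSum_neg_one_zpow_div_sq_add_sq {c : ℝ} (hc : c ≠ 0) :
    HasSum (fun m : ℤ => (-1) ^ m / ((m : ℝ) ^ 2 + c ^ 2)) (π / (c * Real.sinh (π * c))) := by
  rw [← hasSum_ofReal]
  have h := (hasSum_neg_one_zpow_div_sq_sub_sq (ofReal_mul_I_mem_integerComplement hc)).neg
  convert! h using 1
  · funext m
    push_cast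
    rw [mul_pow, I_sq, ← div_neg]
    ring_nf
  · push_cast
    rw [← mul_assoc, sin_mul_I, ← div_neg]
    congr 1
    linear_combination (c * sinh (π * c)) * I_sq

lemma hasSum_neg_one_zpow_div_mul_sq_add_sq {x a : ℝ} (hx : x ≠ 0) (ha : a ≠ 0) :
    HasSum (fun m : ℤ => (-1) ^ m / ((x * m) ^ 2 + a ^ 2))
      (π / (x * (a * Real.sinh (a * (π / x))))) := by
  convert! (hasSum_neg_one_zpow_div_sq_add_sq (div_ne_zero ha hx)).div_const (x ^ 2) using 1
  · funext m
    field_simp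
  · rw [show π * (a / x) = a * (π / x) by ring]
    field_simp

end PartialFractions

section LogChi

open Real

variable {q : ℝ}

lemma summable_odd_pow (hq : |q| < 1) : Summable fun m : ℕ => q ^ (2 * m + 1) :=
  (summable_geometric_of_abs_lt_one hq).comp_injective
    fun a b (hab : 2 * a + 1 = 2 * b + 1) => by omega

lemma abs_odd_pow_lt_one (hq : |q| < 1) (m : ℕ) : |q ^ (2 * m + 1)| < 1 := by
  rw [abs_pow]
  exact pow_lt_one₀ (abs_nonneg q) hq (by omega)

lemma one_add_odd_pow_pos (hq : |q| < 1) (m : ℕ) : 0 < 1 + q ^ (2 * m + 1) := by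
  linarith [(abs_lt.1 (abs_odd_pow_lt_one hq m)).1]

lemma chi_eq_exp_tsum_log (hq : |q| < 1) :
    chi q = exp (∑' m : ℕ, log (1 + q ^ (2 * m + 1))) :=
  (rexp_tsum_eq_tprod (one_add_odd_pow_pos hq)
    (summable_log_one_add_of_summable (summable_odd_pow hq))).symm

lemma chi_pos (hq : |q| < 1) : 0 < chi q :=
  chi_eq_exp_tsum_log hq ▸ exp_pos _

lemma log_chi (hq : |q| < 1) : log (chi q) = ∑' m : ℕ, log (1 + q ^ (2 * m + 1)) := by
  rw [chi_eq_exp_tsum_log hq, log_exp]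

lemma summable_neg_one_pow_div_mul_pow_mul_odd (hq : |q| < 1) :
    Summable fun p : ℕ × ℕ => (-1) ^ p.2 / (p.2 + 1 : ℝ) * q ^ ((p.2 + 1) * (2 * p.1 + 1)) := by
  have hgeom := summable_geometric_of_lt_one (abs_nonneg q) hq
  refine .of_norm_bounded
    (hgeom.mul_of_nonneg hgeom (fun _ => by positivity) (fun _ => by positivity)) ?_
  rintro ⟨m, k⟩
  have hcoeff : ‖(-1) ^ k / (k + 1 : ℝ)‖ ≤ 1 := by
    rw [norm_div, norm_pow, norm_neg, norm_one, one_pow, norm_of_nonneg (by positivity)]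
    exact div_le_one_of_le₀ (by linarith [k.cast_nonneg (α := ℝ)]) (by positivity)
  calc ‖(-1) ^ k / (k + 1 : ℝ) * q ^ ((k + 1) * (2 * m + 1))‖
      ≤ 1 * |q| ^ ((k + 1) * (2 * m + 1)) := by
        rw [norm_mul, norm_pow, norm_eq_abs q]
        gcongr
    _ ≤ 1 * |q| ^ (m + k) := by
        gcongr 1 * ?_
        exact pow_le_pow_of_le_one (abs_nonneg q) hq.le (by nlinarith)
    _ = |q| ^ m * |q| ^ k := by rw [one_mul, pow_add]

lemma hasSum_log_one_add_of_abs_lt_one {y : ℝ} (hy : |y| < 1) :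
    HasSum (fun k : ℕ => (-1) ^ k / (k + 1 : ℝ) * y ^ (k + 1)) (log (1 + y)) := by
  have h := (hasSum_pow_div_log_of_abs_lt_one (x := -y) (by rwa [abs_neg])).neg
  rw [neg_neg, sub_neg_eq_add] at h
  refine h.congr_fun fun k => ?_
  rw [neg_pow, pow_succ]
  ring

lemma hasSum_pow_mul_odd (hq : |q| < 1) {k : ℕ} (hk : k ≠ 0) :
    HasSum (fun m : ℕ => q ^ (k * (2 * m + 1))) (q ^ k / (1 - q ^ (2 * k))) := by
  have hlt : |q ^ (2 * k)| < 1 := by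
    rw [abs_pow]
    exact pow_lt_one₀ (abs_nonneg q) hq (by omega)
  refine ((hasSum_geometric_of_abs_lt_one hlt).mul_left (q ^ k)).congr_fun fun m => ?_
  rw [← pow_mul, ← pow_add]
  ring_nf

lemma hasSum_lambert_log_chi (hq : |q| < 1) :
    HasSum (fun k : ℕ => (-1) ^ k / (k + 1 : ℝ) * (q ^ (k + 1) / (1 - q ^ (2 * (k + 1)))))
      (log (chi q)) := by
  have hdouble := (summable_neg_one_pow_div_mul_pow_mul_odd hq).hasSum
  have hrows := hdouble.prod_fiberwise fun m => by
    simpa only [← pow_mul'] using hasSum_log_one_add_of_abs_lt_one (abs_odd_pow_lt_one hq m)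
  rw [log_chi hq, hrows.tsum_eq]
  exact ((Equiv.prodComm ℕ ℕ).hasSum_iff.2 hdouble).prod_fiberwise fun k =>
    (hasSum_pow_mul_odd hq k.succ_ne_zero).mul_left _

lemma exp_neg_pow_div_one_sub_exp_neg_pow_two_mul (t : ℝ) (k : ℕ) :
    exp (-t) ^ k / (1 - exp (-t) ^ (2 * k)) = 1 / (2 * sinh (k * t)) := by
  have hpow : exp (-t) ^ k = (exp (k * t))⁻¹ := by
    rw [← exp_nat_mul, mul_neg, exp_neg]
  rw [mul_comm 2 k, pow_mul, hpow, sinh_eq, exp_neg]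
  have := exp_ne_zero (k * t)
  field_simp

lemma abs_exp_neg_lt_one {t : ℝ} (ht : 0 < t) : |exp (-t)| < 1 := by
  rwa [abs_exp, exp_lt_one_iff, neg_lt_zero]

-- The term `k = 0` is `-1 / 0 = 0`.
lemma hasSum_neg_one_pow_div_mul_sinh {t : ℝ} (ht : 0 < t) :
    HasSum (fun k : ℕ => (-1) ^ (k + 1) / (k * sinh (k * t))) (2 * log (chi (exp (-t)))) := by
  rw [← hasSum_nat_add_iff' 1]
  convert! (hasSum_lambert_log_chi (abs_exp_neg_lt_one ht)).mul_left 2 using 1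
  · funext k
    rw [exp_neg_pow_div_one_sub_exp_neg_pow_two_mul]
    push_cast
    field_simp
    ring
  · simp

end LogChi

section OuterSum

open Real

lemma neg_one_pow_natAbs_three_mul_add_one (n : ℤ) :
    (-1 : ℝ) ^ ((3 * n + 1).natAbs + 1) = (-1) ^ n := by
  rcases Int.even_or_odd n with hn | hn
  · rw [hn.neg_one_zpow, Even.neg_one_pow (by grind)]
  · rw [hn.neg_one_zpow, Odd.neg_one_pow (by grind)]

lemma natAbs_mul_sinh_natAbs_mul (k : ℤ) (t : ℝ) :
    (k.natAbs : ℝ) * sinh (k.natAbs * t) = k * sinh (k * t) := by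
  rcases abs_choice (k : ℝ) with hk | hk <;> simp [Nat.cast_natAbs, hk]

lemma hasSum_neg_one_zpow_div_three_mul_add_one_mul_sinh {t : ℝ} (ht : 0 < t) :
    HasSum (fun n : ℤ => (-1) ^ n / ((3 * n + 1) * sinh ((3 * n + 1) * t)))
      (2 * log (chi (exp (-t))) - 2 * log (chi (exp (-(3 * t)))) / 3) := by
  have hthree : HasSum
      (fun k : ℕ => (-1) ^ (3 * k + 1) / (((3 * k : ℕ) : ℝ) * sinh ((3 * k : ℕ) * t)))
      (2 * log (chi (exp (-(3 * t)))) / 3) := by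
    refine ((hasSum_neg_one_pow_div_mul_sinh (t := 3 * t) (by positivity)).div_const 3).congr_fun
      fun k => ?_
    have hsign : (-1 : ℝ) ^ (3 * k + 1) = (-1) ^ (k + 1) := by
      rw [pow_succ, pow_mul, pow_succ (-1) k, show (-1 : ℝ) ^ 3 = -1 by norm_num]
    rw [hsign, div_div]
    push_cast
    ring_nf
  refine (hasSum_natAbs_three_mul_add_one (hasSum_neg_one_pow_div_mul_sinh ht) hthree).congr_fun
    fun n => ?_
  rw [neg_one_pow_natAbs_three_mul_add_one, natAbs_mul_sinh_natAbs_mul]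
  push_cast
  rfl

lemma tsum_neg_one_zpow_add_div_mul_sq_add_sq {x a : ℝ} (hx : x ≠ 0) (ha : a ≠ 0) (n : ℤ) :
    ∑' m : ℤ, (-1 : ℝ) ^ (m + n) / ((x * m) ^ 2 + a ^ 2) =
      π / x * ((-1) ^ n / (a * sinh (a * (π / x)))) := by
  have hinner := (hasSum_neg_one_zpow_div_mul_sq_add_sq hx ha).mul_left ((-1) ^ n)
  simp_rw [zpow_add₀ (neg_ne_zero.2 one_ne_zero : (-1 : ℝ) ≠ 0), mul_comm _ ((-1 : ℝ) ^ n),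
    mul_div_assoc]
  rw [hinner.tsum_eq]
  ring

end OuterSum

/-- For real `x > 0`, with `q = e^{-π/x}`,
`F_{(3,1)}(x) = -(2π/(3x)) log(χ(q³)/χ³(q))`. -/
theorem F31_in_terms_of_chi (x : ℝ) (hx : 0 < x) (q : ℝ)
    (hq : q = Real.exp (-Real.pi / x)) :
    Tendsto (fun N : ℕ => ∑ n ∈ Finset.Ioo (-(N : ℤ)) (N : ℤ),
        ∑' m : ℤ, (-1 : ℝ) ^ (m + n) / ((x * m) ^ 2 + (3 * (n : ℝ) + 1) ^ 2))
      atTop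
      (nhds (-(2 * Real.pi / (3 * x)) * Real.log (chi (q ^ 3) / (chi q) ^ 3))) := by
  have ht : 0 < π / x := by positivity
  have hexp : Real.exp (-(π / x)) = q := by rw [hq, neg_div]
  have hexp3 : Real.exp (-(3 * (π / x))) = q ^ 3 := by
    rw [← hexp, ← Real.exp_nat_mul]
    push_cast
    ring_nf
  have hchi : 0 < chi q := hexp ▸ chi_pos (abs_exp_neg_lt_one ht)
  have hchi3 : 0 < chi (q ^ 3) := hexp3 ▸ chi_pos (abs_exp_neg_lt_one (by positivity))
  have hvalue : -(2 * π / (3 * x)) * Real.log (chi (q ^ 3) / chi q ^ 3) =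
      π / x * (2 * Real.log (chi q) - 2 * Real.log (chi (q ^ 3)) / 3) := by
    rw [Real.log_div hchi3.ne' (pow_ne_zero 3 hchi.ne'), Real.log_pow]
    push_cast
    ring
  have hinner (n : ℤ) := tsum_neg_one_zpow_add_div_mul_sq_add_sq hx.ne'
    (show 3 * (n : ℝ) + 1 ≠ 0 by norm_cast; omega) n
  have houter := (hasSum_neg_one_zpow_div_three_mul_add_one_mul_sinh ht).mul_left (π / x)
  rw [hexp, hexp3] at houter
  simp_rw [hinner, hvalue]
  exact houter.comp Finset.tendsto_Ioo_neg
end
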